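/- Let n ≥ 2 be an integer. Every homotopy class in π_n(ℋ_n, 0) is represented by a standard n-loop, i.e. for every γ ∈ π_n(ℋ_n, 0) there exists a continuous map h : [0,1]^n → ℋ_n with h(∂([0,1]^n)) = {0}, whose homotopy class rel ∂([0,1]^n) is γ, and such that h(J_i^n) ⊆ S_i^n for every i ≥ 1, where J_i^n = [1 − 2^{−(i−1)}, 1 − 2^{−i}] × [0,1]^{n−1}. -/

import Mathlib

open scoped Topology Topology.Homotopy unitInterval

noncomputable section

/-- The `n`-sphere of radius `1/j` centered at `(1/j, 0, …, 0)` in `ℝ^{n+1}`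
(it passes through the origin). -/
def hawSphere (n j : ℕ) : Set (EuclideanSpace ℝ (Fin (n+1))) :=
  Metric.sphere (EuclideanSpace.single (0 : Fin (n+1)) ((1 : ℝ)/j)) (1/j)

/-- The `n`-dimensional Hawaiian earring: the union of the spheres `hawSphere n j`, `j ≥ 1`. -/
def hawaiian (n : ℕ) : Set (EuclideanSpace ℝ (Fin (n+1))) :=
  ⋃ j ∈ {j : ℕ | 1 ≤ j}, hawSphere n j

/-- The union `Y_i^{(n)}` of the first `i` spheres of the `n`-dimensional Hawaiian earring. -/
def Ysub (n i : ℕ) : Set (EuclideanSpace ℝ (Fin (n+1))) :=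
  ⋃ j ∈ Finset.Icc 1 i, hawSphere n j

lemma zero_mem_hawSphere (n j : ℕ) : (0 : EuclideanSpace ℝ (Fin (n+1))) ∈ hawSphere n j := by
  have : dist (0 : EuclideanSpace ℝ (Fin (n+1)))
      (EuclideanSpace.single (0 : Fin (n+1)) ((1 : ℝ)/j)) = 1/j := by
    rw [dist_zero_left, EuclideanSpace.norm_single, Real.norm_eq_abs,
      abs_of_nonneg (one_div_nonneg.mpr (Nat.cast_nonneg j))]
  exact Metric.mem_sphere.mpr this

lemma zero_mem_hawaiian (n : ℕ) : (0 : EuclideanSpace ℝ (Fin (n+1))) ∈ hawaiian n :=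
  Set.mem_biUnion (by simp : (1 : ℕ) ∈ {j : ℕ | 1 ≤ j}) (zero_mem_hawSphere n 1)

lemma zero_mem_Ysub (n i : ℕ) : (0 : EuclideanSpace ℝ (Fin (n+1))) ∈ Ysub n (i+1) :=
  Set.mem_biUnion (by simp : (1 : ℕ) ∈ Finset.Icc 1 (i+1)) (zero_mem_hawSphere n 1)

/-- The basepoint (the origin) of the Hawaiian earring. -/
def hawaiianPt (n : ℕ) : ↥(hawaiian n) := ⟨0, zero_mem_hawaiian n⟩

/-- The basepoint (the origin) of `Y_{i+1}^{(n)}`. -/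
def YsubPt (n i : ℕ) : ↥(Ysub n (i+1)) := ⟨0, zero_mem_Ysub n i⟩

/-!
Write `H_j` for the union of the spheres of index greater than `j`. Every loop in `H_j` is homotopic
to the concatenation of a loop in the sphere of index `j + 1` with a loop in `H_{j+1}`: an inversion
is a chart of all spheres minus `0` at once, and in these charts the loop has a `C^1` approximation
which misses the origin on the grid of a given mesh, because the grid has measure zero. Expanding
the charts away from the origin then sends the grid to `0`. If the mesh is small, every box of the
grid ends up in the sphere of index `j + 1` or in `H_{j+1}`, so the loop is a product of loops in
these two sets, which can be reordered because `π_n` is commutative.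

Iterating gives loops `F_j` in `H_j` and `a_j` in the sphere of index `j + 1` such that `F_j` is
homotopic to `a_j * F_{j+1}`, and an Eilenberg swindle shows that `F_0` is homotopic to the infinite
concatenation of the `a_j`.
-/

section InfiniteConcatenation

variable {E : Type*} [NormedAddCommGroup E]

lemma tsum_eq_of_disjoint {M : Type*} [AddCommMonoid M] [TopologicalSpace M] {u : ℕ → M}
    (hu : Pairwise fun j k => u j = 0 ∨ u k = 0) {j : ℕ} (hj : u j ≠ 0) : ∑' k, u k = u j :=
  tsum_eq_single j fun _ hk => (hu hk).resolve_right hj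

theorem continuous_tsum_of_disjoint {Z : Type*} [TopologicalSpace Z] {φ : ℕ → Z → E}
    (hcont : ∀ j, Continuous (φ j)) (hdisj : ∀ z, Pairwise fun j k => φ j z = 0 ∨ φ k z = 0)
    (hsmall : ∀ ε > 0, ∃ r, ∀ j ≥ r, ∀ z, ‖φ j z‖ < ε) :
    Continuous fun z => ∑' j, φ j z := by
  have hunif : TendstoUniformly (fun r z => ∑ j ∈ Finset.range r, φ j z) (fun z => ∑' j, φ j z)
      Filter.atTop := by
    refine Metric.tendstoUniformly_iff.2 fun ε hε => ?_
    obtain ⟨r, hr⟩ := hsmall ε hε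
    filter_upwards [Filter.eventually_ge_atTop r] with s hs z
    by_cases hz : ∀ j, φ j z = 0
    · simpa only [hz, tsum_zero, Finset.sum_const_zero, dist_self] using hε
    push Not at hz
    obtain ⟨j, hj⟩ := hz
    rw [tsum_eq_of_disjoint (hdisj z) hj]
    by_cases hjs : j < s
    · rw [Finset.sum_eq_single_of_mem j (Finset.mem_range.2 hjs)
        fun k _ hk => (hdisj z hk).resolve_right hj, dist_self]
      exact hε
    · rw [Finset.sum_eq_zero fun k hk => (hdisj z fun hkj : k = j =>
        hjs (hkj ▸ Finset.mem_range.1 hk)).resolve_right hj, dist_zero_right]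
      exact hr j (hs.trans (not_lt.1 hjs)) z
  exact hunif.continuous (.of_forall fun r => continuous_finsetSum _ fun j _ => hcont j)

/-- The map of `[0,1]` stretching the dyadic block `[1 - 2^{-j}, 1 - 2^{-(j+1)}]` over `[0,1]`,
constant on either side of it. -/
def zoom (j : ℕ) (x : I) : I :=
  Set.projIcc 0 1 zero_le_one ((2 : ℝ) ^ (j + 1) * (x - 1) + 2)

@[fun_prop]
lemma continuous_zoom (j : ℕ) : Continuous (zoom j) :=
  continuous_projIcc.comp (by fun_prop)

lemma zoom_eq_zero {j : ℕ} {x : I} (hx : (x : ℝ) ≤ 1 - 2⁻¹ ^ j) : zoom j x = 0 := by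
  refine Set.projIcc_of_le_left _ ?_
  have hpow : (2 : ℝ) ^ (j + 1) * 2⁻¹ ^ j = 2 := by
    rw [pow_succ, mul_right_comm, ← mul_pow]; norm_num
  nlinarith [mul_le_mul_of_nonneg_left hx (by positivity : (0 : ℝ) ≤ 2 ^ (j + 1))]

lemma zoom_eq_one {j : ℕ} {x : I} (hx : 1 - (2 : ℝ)⁻¹ ^ (j + 1) ≤ x) : zoom j x = 1 := by
  refine Set.projIcc_of_right_le _ ?_
  have hpow : (2 : ℝ) ^ (j + 1) * 2⁻¹ ^ (j + 1) = 1 := by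
    rw [← mul_pow]; norm_num
  nlinarith [mul_le_mul_of_nonneg_left hx (by positivity : (0 : ℝ) ≤ 2 ^ (j + 1))]

lemma one_sub_inv_two_pow_mono {j k : ℕ} (h : j ≤ k) : 1 - (2 : ℝ)⁻¹ ^ j ≤ 1 - 2⁻¹ ^ k :=
  sub_le_sub_left (pow_le_pow_of_le_one (by norm_num) (by norm_num) h) 1

lemma zoom_eq_one_or_zoom_eq_zero {j k : ℕ} (hjk : j < k) (x : I) : zoom j x = 1 ∨ zoom k x = 0 :=
  (le_total (1 - (2 : ℝ)⁻¹ ^ (j + 1)) x).imp zoom_eq_one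
    fun h => zoom_eq_zero (h.trans (one_sub_inv_two_pow_mono hjk))

lemma zoom_zero (x : I) : zoom 0 x = Set.projIcc 0 1 zero_le_one (2 * (x : ℝ)) := by
  unfold zoom
  congr 1
  ring

lemma zoom_succ_eq_zero (j : ℕ) {x : I} (hx : (x : ℝ) ≤ 1 / 2) : zoom (j + 1) x = 0 :=
  zoom_eq_zero <| hx.trans <| by
    simpa only [zero_add, pow_one, show 1 - (2 : ℝ)⁻¹ = 1 / 2 by norm_num] using
      one_sub_inv_two_pow_mono (Nat.le_add_left 1 j)

lemma zoom_succ (j : ℕ) {x : I} (hx : 1 / 2 ≤ (x : ℝ)) :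
    zoom (j + 1) x = zoom j (Set.projIcc 0 1 zero_le_one (2 * (x : ℝ) - 1)) := by
  have hval : (Set.projIcc (0 : ℝ) 1 zero_le_one (2 * (x : ℝ) - 1) : ℝ) = 2 * x - 1 :=
    congrArg Subtype.val (Set.projIcc_of_mem zero_le_one ⟨by linarith, by linarith [x.2.2]⟩)
  simp only [zoom, hval]
  congr 1
  ring

variable {N : Type*} [DecidableEq N]

lemma update_mem_boundary {i : N} {t : N → I} {s : I} (hs : s = 0 ∨ s = 1) :
    Function.update t i s ∈ Cube.boundary N :=
  ⟨i, by rwa [Function.update_self]⟩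

/-- The functions `F j` on the cube juxtaposed along the `i`-th coordinate, the `j`-th one placed on
the block `1 - 2^{-j} ≤ t i ≤ 1 - 2^{-(j+1)}`. This is meant for functions vanishing on the boundary
of the cube, for which at most one summand is nonzero. -/
def juxtapose (i : N) (F : ℕ → (N → I) → E) (t : N → I) : E :=
  ∑' j, F j (Function.update t i (zoom j (t i)))

section Juxtapose

variable {i : N} {F : ℕ → (N → I) → E}

lemma pairwise_block_eq_zero (hF : ∀ j, ∀ t ∈ Cube.boundary N, F j t = 0) (i : N) (t : N → I) :
    Pairwise fun j k => F j (Function.update t i (zoom j (t i))) = 0 ∨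
      F k (Function.update t i (zoom k (t i))) = 0 := by
  intro j k hjk
  wlog hlt : j < k generalizing j k
  · exact (this hjk.symm (hjk.lt_or_gt.resolve_left hlt)).symm
  exact (zoom_eq_one_or_zoom_eq_zero hlt (t i)).imp
    (fun h => hF j _ (update_mem_boundary (.inr h))) fun h => hF k _ (update_mem_boundary (.inl h))

lemma exists_juxtapose_eq (hF : ∀ j, ∀ t ∈ Cube.boundary N, F j t = 0) (i : N) (t : N → I) :
    ∃ j, juxtapose i F t = F j (Function.update t i (zoom j (t i))) := by
  by_cases h : ∀ j, F j (Function.update t i (zoom j (t i))) = 0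
  · exact ⟨0, by simp only [juxtapose, h, tsum_zero]⟩
  push Not at h
  exact h.imp fun j hj => tsum_eq_of_disjoint (pairwise_block_eq_zero hF i t) hj

lemma juxtapose_of_mem_boundary (hF : ∀ j, ∀ t ∈ Cube.boundary N, F j t = 0) {t : N → I}
    (ht : t ∈ Cube.boundary N) : juxtapose i F t = 0 := by
  obtain ⟨j, hj⟩ := exists_juxtapose_eq hF i t
  rw [hj]
  obtain ⟨k, hk⟩ := ht
  refine hF j _ ?_
  by_cases hki : k = i
  · subst hki
    refine update_mem_boundary (hk.imp (fun h => zoom_eq_zero ?_) fun h => zoom_eq_one ?_)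
    · rw [h]
      exact sub_nonneg.2 (pow_le_one₀ (by norm_num) (by norm_num))
    · rw [h]
      exact sub_le_self _ (by positivity)
  · exact ⟨k, by rwa [Function.update_of_ne hki]⟩

lemma juxtapose_of_mem_block (hF : ∀ j, ∀ t ∈ Cube.boundary N, F j t = 0) {j : ℕ} {t : N → I}
    (ht : (t i : ℝ) ∈ Set.Icc (1 - (2 : ℝ)⁻¹ ^ j) (1 - 2⁻¹ ^ (j + 1))) :
    juxtapose i F t = F j (Function.update t i (zoom j (t i))) := by
  refine tsum_eq_single j fun k hk => hF k _ (update_mem_boundary ?_)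
  rcases hk.lt_or_gt with hlt | hgt
  · exact .inr (zoom_eq_one ((one_sub_inv_two_pow_mono hlt).trans ht.1))
  · exact .inl (zoom_eq_zero (ht.2.trans (one_sub_inv_two_pow_mono hgt)))

lemma juxtapose_of_le_half (hF : ∀ j, ∀ t ∈ Cube.boundary N, F j t = 0) {t : N → I}
    (ht : (t i : ℝ) ≤ 1 / 2) :
    juxtapose i F t =
      F 0 (Function.update t i (Set.projIcc 0 1 zero_le_one (2 * (t i : ℝ)))) := by
  rw [← zoom_zero]
  refine tsum_eq_single 0 fun j hj => hF j _ (update_mem_boundary (.inl ?_))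
  obtain ⟨k, rfl⟩ := Nat.exists_eq_succ_of_ne_zero hj
  exact zoom_succ_eq_zero k ht

lemma juxtapose_of_half_le (hF : ∀ j, ∀ t ∈ Cube.boundary N, F j t = 0) {t : N → I}
    (ht : 1 / 2 ≤ (t i : ℝ)) :
    juxtapose i F t = juxtapose i (fun j => F (j + 1))
      (Function.update t i (Set.projIcc 0 1 zero_le_one (2 * (t i : ℝ) - 1))) := by
  simp only [juxtapose, Function.update_self, Function.update_idem, ← zoom_succ _ ht]
  refine (Nat.succ_injective.tsum_eq fun j hj => ?_).symm
  refine Nat.exists_eq_succ_of_ne_zero (fun hj0 => hj ?_) |>.imp fun _ => Eq.symm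
  subst hj0
  refine hF 0 _ (update_mem_boundary (.inr (zoom_eq_one ?_)))
  rw [zero_add, pow_one]
  linarith

lemma continuous_juxtapose {Z : Type*} [TopologicalSpace Z] (i : N) {F : ℕ → Z → (N → I) → E}
    {T : Z → N → I} (hF : ∀ j, Continuous fun p : Z × (N → I) => F j p.1 p.2) (hT : Continuous T)
    (hboundary : ∀ j z, ∀ t ∈ Cube.boundary N, F j z t = 0)
    (hsmall : ∀ ε > 0, ∃ r, ∀ j ≥ r, ∀ z t, ‖F j z t‖ < ε) :
    Continuous fun z => juxtapose i (fun j => F j z) (T z) := by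
  refine continuous_tsum_of_disjoint (fun j => ?_)
    (fun z => pairwise_block_eq_zero (fun j => hboundary j z) i (T z)) fun ε hε => ?_
  · have hTi : Continuous fun z => T z i := (continuous_apply i).comp hT
    exact (hF j).comp (continuous_id.prodMk (hT.update i ((continuous_zoom j).comp hTi)))
  · exact (hsmall ε hε).imp fun r hr j hj z => hr j hj z _

end Juxtapose

end InfiniteConcatenation

section HomotopyClass

variable {N X : Type*} [TopologicalSpace X] {x : X}

/-- The element of the homotopy group represented by a loop. -/
def homotopyClass (f : Ω^ N X x) : HomotopyGroup N X x := ⟦f⟧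

lemma homotopyClass_eq_iff {f g : Ω^ N X x} :
    homotopyClass f = homotopyClass g ↔ GenLoop.Homotopic f g :=
  Quotient.eq

lemma homotopyClass_transAt [DecidableEq N] [Nonempty N] (i : N) (f g : Ω^ N X x) :
    homotopyClass (GenLoop.transAt i f g) = homotopyClass g * homotopyClass f :=
  HomotopyGroup.mul_spec.symm

end HomotopyClass

section Swindle

/-- A loop in `A`, viewed as a loop in a larger set `B`. -/
def inclLoop {N E : Type*} [TopologicalSpace E] {A B : Set E} (h : A ⊆ B) {x : E} {hx : x ∈ A}
    (f : Ω^ N A ⟨x, hx⟩) : Ω^ N B ⟨x, h hx⟩ :=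
  ⟨⟨fun t => ⟨f t, h (f t).2⟩, by fun_prop⟩, fun t ht =>
    Subtype.ext (congrArg Subtype.val (f.2 t ht) :)⟩

/-- A decreasing sequence of sets containing `0` whose diameters tend to `0`: the setting in which
infinitely many loops, the `j`-th one in the `j`-th set, can be concatenated. -/
structure ShrinkingSets (E : Type*) [NormedAddCommGroup E] where
  sets : ℕ → Set E
  antitone : Antitone sets
  zero_mem : ∀ j, 0 ∈ sets j
  small : ∀ ε > 0, ∃ j, sets j ⊆ Metric.ball 0 ε

namespace ShrinkingSets

variable {E : Type*} [NormedAddCommGroup E] (A : ShrinkingSets E)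

/-- Loops at `0` in the `j`-th set of a shrinking sequence. -/
abbrev Loop (N : Type*) (j : ℕ) : Type _ := Ω^ N (A.sets j) ⟨0, A.zero_mem j⟩

/-- The inclusion of loops in one set of a shrinking sequence into the loops in the previous set. -/
abbrev incl {N : Type*} {j : ℕ} (f : A.Loop N (j + 1)) : A.Loop N j :=
  inclLoop (A.antitone j.le_succ) f

variable {A} {N : Type*}

lemma Loop.coe_boundary {j : ℕ} (f : A.Loop N j) {t : N → I} (ht : t ∈ Cube.boundary N) :
    (f t : E) = 0 :=
  congrArg Subtype.val (f.2 t ht)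

lemma exists_forall_norm_lt (A : ShrinkingSets E) {ε : ℝ} (hε : 0 < ε) :
    ∃ r, ∀ j ≥ r, ∀ x ∈ A.sets j, ‖x‖ < ε :=
  (A.small ε hε).imp fun _ hr _ hj _ hx => mem_ball_zero_iff.1 (hr (A.antitone hj hx))

variable [DecidableEq N] (i : N)

lemma juxtapose_mem {F : ℕ → (N → I) → E} (hmem : ∀ j t, F j t ∈ A.sets j)
    (hF : ∀ j, ∀ t ∈ Cube.boundary N, F j t = 0) (t : N → I) : juxtapose i F t ∈ A.sets 0 := by
  obtain ⟨j, hj⟩ := exists_juxtapose_eq hF i t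
  rw [hj]
  exact A.antitone (Nat.zero_le j) (hmem j _)

/-- The concatenation of infinitely many loops along the `i`-th coordinate. -/
def concat (F : ∀ j, A.Loop N j) : A.Loop N 0 where
  val :=
    { toFun t := ⟨juxtapose i (fun j t => (F j t : E)) t,
        juxtapose_mem i (fun j t => (F j t).2) (fun j _ => (F j).coe_boundary) t⟩
      continuous_toFun := Continuous.subtype_mk
        (continuous_juxtapose i (F := fun j _ t => (F j t : E)) (fun j => by fun_prop) continuous_id
          (fun j _ _ => (F j).coe_boundary)
          fun _ hε => (A.exists_forall_norm_lt hε).imp fun r hr j hj _ t => hr j hj _ (F j t).2) _ }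
  property _ ht := Subtype.ext (juxtapose_of_mem_boundary (fun j _ => (F j).coe_boundary) ht)

lemma coe_concat (F : ∀ j, A.Loop N j) (t : N → I) :
    (concat i F t : E) = juxtapose i (fun j t => (F j t : E)) t :=
  rfl

lemma concat_of_mem_block (F : ∀ j, A.Loop N j) {j : ℕ} {t : N → I}
    (ht : (t i : ℝ) ∈ Set.Icc (1 - (2 : ℝ)⁻¹ ^ j) (1 - 2⁻¹ ^ (j + 1))) :
    (concat i F t : E) = F j (Function.update t i (zoom j (t i))) :=
  juxtapose_of_mem_block (fun j _ => (F j).coe_boundary) ht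

lemma concat_homotopic {F G : ∀ j, A.Loop N j} (h : ∀ j, GenLoop.Homotopic (F j) (G j)) :
    GenLoop.Homotopic (concat i F) (concat i G) := by
  let H (j : ℕ) : (F j).1.HomotopyRel (G j).1 (Cube.boundary N) := (h j).some
  have hboundary (j : ℕ) (s : I) (t : N → I) (ht : t ∈ Cube.boundary N) : (H j (s, t) : E) = 0 :=
    (congrArg Subtype.val ((H j).eq_fst s ht)).trans ((F j).coe_boundary ht)
  exact
   ⟨{ toFun z := ⟨juxtapose i (fun j t => (H j (z.1, t) : E)) z.2,
        juxtapose_mem i (fun j t => (H j (z.1, t)).2) (fun j => hboundary j z.1) z.2⟩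
      continuous_toFun := Continuous.subtype_mk
        (continuous_juxtapose i (F := fun j z t => (H j (z.1, t) : E)) (fun j => by fun_prop)
          continuous_snd (fun j z => hboundary j z.1)
          fun _ hε => (A.exists_forall_norm_lt hε).imp fun r hr j hj z t => hr j hj _ (H j _).2) _
      map_zero_left t := Subtype.ext <| by
        simp only [(H _).apply_zero]; rfl
      map_one_left t := Subtype.ext <| by
        simp only [(H _).apply_one]; rfl
      prop' s t ht := Subtype.ext <|
        (juxtapose_of_mem_boundary (fun j => hboundary j s) ht).trans
          ((concat i F).coe_boundary ht).symm }⟩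

lemma concat_eq_transAt (F : ∀ j, A.Loop N j) :
    concat i F = GenLoop.transAt i (F 0) (concat i fun j => A.incl (F (j + 1))) := by
  refine GenLoop.ext _ _ fun t => Subtype.ext ?_
  change juxtapose i (fun j t => (F j t : E)) t = ((ite _ _ _ : A.sets 0) : E)
  split_ifs with ht
  · exact juxtapose_of_le_half (fun j _ => (F j).coe_boundary) ht
  · exact juxtapose_of_half_le (fun j _ => (F j).coe_boundary) (le_of_not_ge ht)

lemma concat_transAt {i k : N} (hki : k ≠ i) (F G : ∀ j, A.Loop N j) :
    concat i (fun j => GenLoop.transAt k (F j) (G j)) =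
      GenLoop.transAt k (concat i F) (concat i G) := by
  refine GenLoop.ext _ _ fun t => Subtype.ext ?_
  change juxtapose i (fun j t => ((ite _ _ _ : A.sets j) : E)) t = ((ite _ _ _ : A.sets 0) : E)
  split_ifs with ht <;>
  · simp only [coe_concat, juxtapose, Function.update_of_ne hki, Function.update_of_ne hki.symm, ht,
      if_true, if_false, Function.update_comm hki]

/-- The Eilenberg swindle: with `F₀ * F₁ * ⋯ ≃ (a₀ F₁) * (a₁ F₂) * ⋯ = (a₀ * a₁ * ⋯) (F₁ * F₂ * ⋯)`,
where juxtaposition is concatenation along `k`, the factor `F₁ * F₂ * ⋯` cancels. -/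
theorem homotopic_concat {i k : N} (hki : k ≠ i) {F a : ∀ j, A.Loop N j}
    (h : ∀ j, GenLoop.Homotopic (F j) (GenLoop.transAt k (a j) (A.incl (F (j + 1))))) :
    GenLoop.Homotopic (F 0) (concat i a) := by
  have : Nontrivial N := ⟨⟨k, i, hki⟩⟩
  let tail : A.Loop N 0 := concat i fun j => A.incl (F (j + 1))
  refine homotopyClass_eq_iff.1 (mul_left_cancel (a := homotopyClass tail) ?_)
  calc homotopyClass tail * homotopyClass (F 0)
      = homotopyClass (GenLoop.transAt i (F 0) tail) := (homotopyClass_transAt i _ _).symm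
    _ = homotopyClass (concat i F) := by rw [concat_eq_transAt i F]
    _ = homotopyClass (concat i fun j => GenLoop.transAt k (a j) (A.incl (F (j + 1)))) :=
        homotopyClass_eq_iff.2 (concat_homotopic i h)
    _ = homotopyClass (GenLoop.transAt k (concat i a) tail) := by rw [concat_transAt hki]
    _ = homotopyClass tail * homotopyClass (concat i a) := homotopyClass_transAt k _ _

end ShrinkingSets

end Swindle

section Earring

variable {n : ℕ}

lemma mem_hawSphere_iff {i : ℕ} (hi : 0 < i) {x : EuclideanSpace ℝ (Fin (n + 1))} :
    x ∈ hawSphere n i ↔ i * ‖x‖ ^ 2 = 2 * x 0 := by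
  have hi' : (0 : ℝ) < i := Nat.cast_pos.2 hi
  have hdist : ‖x - EuclideanSpace.single 0 ((1 : ℝ) / i)‖ ^ 2 =
      ‖x‖ ^ 2 - 2 * x 0 / i + (1 / i) ^ 2 := by
    rw [norm_sub_sq_real, EuclideanSpace.inner_single_right, PiLp.norm_single, Real.norm_eq_abs,
      sq_abs, conj_trivial]
    ring
  rw [hawSphere, mem_sphere_iff_norm, ← sq_eq_sq₀ (norm_nonneg _) (by positivity), hdist,
    add_eq_right, sub_eq_zero, eq_div_iff hi'.ne', mul_comm]

/-- For `x` on the `i`-th sphere other than `0`, this is `i`: the inversion `x ↦ (2 / ‖x‖ ^ 2) • x`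
maps that sphere to the hyperplane `x 0 = i`. -/
def sphereIndex (x : EuclideanSpace ℝ (Fin (n + 1))) : ℝ := 2 * x 0 / ‖x‖ ^ 2

lemma sphereIndex_of_mem {i : ℕ} (hi : 0 < i) {x : EuclideanSpace ℝ (Fin (n + 1))} (hx : x ≠ 0)
    (hmem : x ∈ hawSphere n i) : sphereIndex x = i := by
  rw [sphereIndex, ← (mem_hawSphere_iff hi).1 hmem,
    mul_div_cancel_right₀ _ (pow_ne_zero 2 (norm_ne_zero_iff.2 hx))]

lemma continuousAt_sphereIndex {x : EuclideanSpace ℝ (Fin (n + 1))} (hx : x ≠ 0) :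
    ContinuousAt sphereIndex x := by
  have := pow_ne_zero 2 (norm_ne_zero_iff.2 hx)
  unfold sphereIndex
  fun_prop (disch := assumption)

lemma norm_le_of_mem_hawSphere {i : ℕ} {x : EuclideanSpace ℝ (Fin (n + 1))}
    (hx : x ∈ hawSphere n i) : ‖x‖ ≤ 2 / i := by
  have hcenter : ‖EuclideanSpace.single (0 : Fin (n + 1)) ((1 : ℝ) / i)‖ = 1 / i := by
    rw [PiLp.norm_single, Real.norm_of_nonneg (by positivity)]
  calc ‖x‖
      ≤ ‖x - EuclideanSpace.single 0 ((1 : ℝ) / i)‖ + ‖EuclideanSpace.single 0 ((1 : ℝ) / i)‖ :=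
        norm_le_norm_sub_add _ _
    _ = 2 / i := by rw [mem_sphere_iff_norm.1 hx, hcenter]; ring

/-- The union of the spheres of index greater than `j`; for `j = 0` this is the whole earring. -/
def hawTail (n j : ℕ) : Set (EuclideanSpace ℝ (Fin (n + 1))) :=
  ⋃ i ∈ {i : ℕ | j < i}, hawSphere n i

lemma mem_hawTail {j : ℕ} {x : EuclideanSpace ℝ (Fin (n + 1))} :
    x ∈ hawTail n j ↔ ∃ i, j < i ∧ x ∈ hawSphere n i := by
  simp only [hawTail, Set.mem_ofPred_eq, Set.mem_iUnion, exists_prop]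

lemma hawTail_antitone (n : ℕ) : Antitone (hawTail n) := fun _ _ hjk =>
  Set.biUnion_subset_biUnion_left fun _ hi => hjk.trans_lt hi

lemma zero_mem_hawTail (n j : ℕ) : (0 : EuclideanSpace ℝ (Fin (n + 1))) ∈ hawTail n j :=
  mem_hawTail.2 ⟨j + 1, j.lt_succ_self, zero_mem_hawSphere n (j + 1)⟩

lemma mem_hawSphere_or_mem_hawTail_succ {j : ℕ} {x : EuclideanSpace ℝ (Fin (n + 1))}
    (hx : x ∈ hawTail n j) : x ∈ hawSphere n (j + 1) ∨ x ∈ hawTail n (j + 1) := by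
  obtain ⟨i, hji, hi⟩ := mem_hawTail.1 hx
  rcases (Nat.succ_le_of_lt hji).eq_or_lt with rfl | hlt
  · exact .inl hi
  · exact .inr (mem_hawTail.2 ⟨i, hlt, hi⟩)

lemma norm_le_of_mem_hawTail {j : ℕ} {x : EuclideanSpace ℝ (Fin (n + 1))} (hx : x ∈ hawTail n j) :
    ‖x‖ ≤ 2 / (j + 1) := by
  obtain ⟨i, hji, hi⟩ := mem_hawTail.1 hx
  refine (norm_le_of_mem_hawSphere hi).trans ?_
  gcongr
  exact_mod_cast hji

/-- The tails of the Hawaiian earring. -/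
def hawTails (n : ℕ) : ShrinkingSets (EuclideanSpace ℝ (Fin (n + 1))) where
  sets := hawTail n
  antitone := hawTail_antitone n
  zero_mem := zero_mem_hawTail n
  small ε hε := by
    obtain ⟨j, hj⟩ := exists_nat_one_div_lt (half_pos hε)
    refine ⟨j, fun x hx => mem_ball_zero_iff.2 ((norm_le_of_mem_hawTail hx).trans_lt ?_)⟩
    calc (2 : ℝ) / (j + 1) = 2 * (1 / (j + 1)) := by ring
      _ < 2 * (ε / 2) := by gcongr
      _ = ε := by ring

lemma eventually_mem_hawSphere {i : ℕ} (hi : 0 < i) {x : EuclideanSpace ℝ (Fin (n + 1))}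
    (hx : x ≠ 0) (hxi : x ∈ hawSphere n i) :
    ∀ᶠ y in 𝓝 x, y ∈ hawTail n 0 → y ∈ hawSphere n i := by
  have hnear : ∀ᶠ y in 𝓝 x, |sphereIndex y - i| < 1 := by
    rw [← sphereIndex_of_mem hi hx hxi]
    exact (continuousAt_sphereIndex hx).eventually (eventually_abs_sub_lt _ one_pos)
  filter_upwards [hnear, isOpen_ne.mem_nhds hx] with y hy hy0 hytail
  obtain ⟨k, hk, hyk⟩ := mem_hawTail.1 hytail
  rw [sphereIndex_of_mem hk hy0 hyk] at hy
  have : |(k : ℤ) - i| < 1 := by exact_mod_cast hy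
  rwa [show i = k by rw [Int.abs_lt_one_iff] at this; omega]

/-- The function which is `G i` on the preimage under `f` of the `i`-th sphere without `0`, and `0`
on the preimage of `0`. -/
def glue {Z : Type*} (f : Z → EuclideanSpace ℝ (Fin (n + 1)))
    (G : ℕ → Z → EuclideanSpace ℝ (Fin (n + 1))) (z : Z) : EuclideanSpace ℝ (Fin (n + 1)) :=
  open Classical in if f z = 0 then 0 else G ⌊sphereIndex (f z)⌋₊ z

section Glue

variable {Z : Type*} {f : Z → EuclideanSpace ℝ (Fin (n + 1))}
  {G : ℕ → Z → EuclideanSpace ℝ (Fin (n + 1))}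

lemma glue_of_eq_zero {z : Z} (hz : f z = 0) : glue f G z = 0 :=
  if_pos hz

lemma glue_of_mem {i : ℕ} (hi : 0 < i) {z : Z} (hz : f z ≠ 0) (hzi : f z ∈ hawSphere n i) :
    glue f G z = G i z := by
  rw [glue, if_neg hz, sphereIndex_of_mem hi hz hzi, Nat.floor_natCast]

lemma continuous_glue [TopologicalSpace Z] (hf : Continuous f) (hmem : ∀ z, f z ∈ hawTail n 0)
    (hG : ∀ i > 0, ∀ z, f z ≠ 0 → f z ∈ hawSphere n i → ContinuousAt (G i) z) {C : ℝ}
    (hbound : ∀ i > 0, ∀ z, f z ≠ 0 → f z ∈ hawSphere n i → ‖G i z‖ ≤ C * ‖f z‖) :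
    Continuous (glue f G) := by
  refine continuous_iff_continuousAt.2 fun z => ?_
  by_cases hz : f z = 0
  · have hle (w : Z) : ‖glue f G w‖ ≤ C * ‖f w‖ := by
      by_cases hw : f w = 0
      · rw [glue_of_eq_zero hw, hw, norm_zero, mul_zero]
      · obtain ⟨i, hi, hwi⟩ := mem_hawTail.1 (hmem w)
        exact (glue_of_mem hi hw hwi).symm ▸ hbound i hi w hw hwi
    rw [ContinuousAt, glue_of_eq_zero hz]
    refine squeeze_zero_norm hle ?_
    have hlim : Continuous fun w => C * ‖f w‖ := by fun_prop
    simpa only [hz, norm_zero, mul_zero] using hlim.tendsto z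
  · obtain ⟨i, hi, hzi⟩ := mem_hawTail.1 (hmem z)
    refine (hG i hi z hz hzi).congr ?_
    filter_upwards [hf.continuousAt.eventually (eventually_mem_hawSphere hi hz hzi),
      hf.continuousAt.eventually_ne hz] with w hw hw0
    exact (glue_of_mem hi hw0 (hw (hmem w))).symm

end Glue

/-- The point of `ℝ^{n+1}` with first coordinate `a` and remaining coordinates `v`. -/
def euclideanCons (a : ℝ) (v : EuclideanSpace ℝ (Fin n)) : EuclideanSpace ℝ (Fin (n + 1)) :=
  WithLp.toLp 2 (Fin.cons a v.ofLp)

/-- The point of `ℝ^n` formed by all but the first coordinate of a point of `ℝ^{n+1}`. -/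
def euclideanTail (x : EuclideanSpace ℝ (Fin (n + 1))) : EuclideanSpace ℝ (Fin n) :=
  WithLp.toLp 2 (Fin.tail x.ofLp)

lemma euclideanCons_zero (a : ℝ) (v : EuclideanSpace ℝ (Fin n)) : euclideanCons a v 0 = a :=
  rfl

lemma euclideanCons_self_tail (x : EuclideanSpace ℝ (Fin (n + 1))) :
    euclideanCons (x 0) (euclideanTail x) = x :=
  PiLp.ext (congrFun (Fin.cons_self_tail x.ofLp))

lemma norm_sq_euclideanCons (a : ℝ) (v : EuclideanSpace ℝ (Fin n)) :
    ‖euclideanCons a v‖ ^ 2 = a ^ 2 + ‖v‖ ^ 2 := by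
  simp only [EuclideanSpace.real_norm_sq_eq, Fin.sum_univ_succ, euclideanCons, Fin.cons_zero,
    Fin.cons_succ]

lemma smul_euclideanCons (c a : ℝ) (v : EuclideanSpace ℝ (Fin n)) :
    c • euclideanCons a v = euclideanCons (c * a) (c • v) := by
  ext k
  refine Fin.cases rfl (fun _ => rfl) k

lemma continuous_euclideanTail : Continuous (euclideanTail (n := n)) := by
  unfold euclideanTail Fin.tail
  fun_prop

/-- The chart of a sphere of the earring minus `0`: the last `n` coordinates of the inversion
`x ↦ (2 / ‖x‖ ^ 2) • x`, which maps the `i`-th sphere to the hyperplane `x 0 = i`. -/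
def chart (x : EuclideanSpace ℝ (Fin (n + 1))) : EuclideanSpace ℝ (Fin n) :=
  (2 / ‖x‖ ^ 2) • euclideanTail x

lemma continuousAt_chart {x : EuclideanSpace ℝ (Fin (n + 1))} (hx : x ≠ 0) :
    ContinuousAt chart x := by
  have hscale : ContinuousAt (fun y : EuclideanSpace ℝ (Fin (n + 1)) => 2 / ‖y‖ ^ 2) x :=
    continuousAt_const.div (by fun_prop) (pow_ne_zero 2 (norm_ne_zero_iff.2 hx))
  exact hscale.smul continuous_euclideanTail.continuousAt

lemma euclideanCons_chart {i : ℕ} (hi : 0 < i) {x : EuclideanSpace ℝ (Fin (n + 1))} (hx : x ≠ 0)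
    (hmem : x ∈ hawSphere n i) : euclideanCons i (chart x) = (2 / ‖x‖ ^ 2) • x := by
  conv_rhs => rw [← euclideanCons_self_tail x, smul_euclideanCons, euclideanCons_self_tail]
  rw [← sphereIndex_of_mem hi hx hmem, sphereIndex, chart, div_mul_eq_mul_div]

lemma sq_add_norm_chart_sq {i : ℕ} (hi : 0 < i) {x : EuclideanSpace ℝ (Fin (n + 1))} (hx : x ≠ 0)
    (hmem : x ∈ hawSphere n i) : (i : ℝ) ^ 2 + ‖chart x‖ ^ 2 = 4 / ‖x‖ ^ 2 := by
  rw [← norm_sq_euclideanCons, euclideanCons_chart hi hx hmem, norm_smul, mul_pow,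
    Real.norm_eq_abs, sq_abs]
  have := norm_ne_zero_iff.2 hx
  field_simp
  norm_num

/-- In homogeneous coordinates, the inverse of the chart of the `i`-th sphere: for `l ≠ 0`,
`spherePoint i l v` is the point of this sphere whose chart is `l⁻¹ • v`, and for `l = 0` it is the
point `0` at infinity. -/
def spherePoint (i : ℕ) (l : ℝ) (v : EuclideanSpace ℝ (Fin n)) : EuclideanSpace ℝ (Fin (n + 1)) :=
  (2 * l / ((l * i) ^ 2 + ‖v‖ ^ 2)) • euclideanCons (l * i) v

lemma norm_sq_spherePoint (i : ℕ) (l : ℝ) (v : EuclideanSpace ℝ (Fin n)) :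
    ‖spherePoint i l v‖ ^ 2 = 4 * l ^ 2 / ((l * i) ^ 2 + ‖v‖ ^ 2) := by
  rw [spherePoint, norm_smul, mul_pow, norm_sq_euclideanCons, Real.norm_eq_abs, sq_abs]
  rcases eq_or_ne ((l * i) ^ 2 + ‖v‖ ^ 2) 0 with h | _
  · rw [h, div_zero, mul_zero, div_zero]
  · field_simp
    ring

lemma spherePoint_mem {i : ℕ} (hi : 0 < i) (l : ℝ) (v : EuclideanSpace ℝ (Fin n)) :
    spherePoint i l v ∈ hawSphere n i := by
  rw [mem_hawSphere_iff hi, norm_sq_spherePoint, spherePoint, PiLp.smul_apply, smul_eq_mul,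
    euclideanCons_zero]
  ring

lemma spherePoint_zero (i : ℕ) (v : EuclideanSpace ℝ (Fin n)) : spherePoint i 0 v = 0 := by
  rw [spherePoint, mul_zero, zero_div, zero_smul]

lemma spherePoint_chart {i : ℕ} (hi : 0 < i) {x : EuclideanSpace ℝ (Fin (n + 1))} (hx : x ≠ 0)
    (hmem : x ∈ hawSphere n i) : spherePoint i 1 (chart x) = x := by
  rw [spherePoint, one_mul, sq_add_norm_chart_sq hi hx hmem, euclideanCons_chart hi hx hmem,
    smul_smul]
  have := norm_ne_zero_iff.2 hx
  rw [show 2 * 1 / (4 / ‖x‖ ^ 2) * (2 / ‖x‖ ^ 2) = 1 by field_simp; norm_num, one_smul]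

/-- In the chart of the `i`-th sphere, this homotopy from the identity pushes the complement of the
ball of radius `δ / s` to infinity, that is, to the point `0` of the sphere. -/
def expand (i : ℕ) (δ s : ℝ) (v : EuclideanSpace ℝ (Fin n)) : EuclideanSpace ℝ (Fin (n + 1)) :=
  spherePoint i (max 0 (1 - s * ‖v‖ / δ)) v

lemma expand_zero (i : ℕ) (δ : ℝ) (v : EuclideanSpace ℝ (Fin n)) :
    expand i δ 0 v = spherePoint i 1 v := by
  rw [expand, zero_mul, zero_div, sub_zero, max_eq_right zero_le_one]

lemma expand_one (i : ℕ) {δ : ℝ} (hδ : 0 < δ) {v : EuclideanSpace ℝ (Fin n)} (hv : δ ≤ ‖v‖) :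
    expand i δ 1 v = 0 := by
  rw [expand, one_mul, max_eq_left (sub_nonpos.2 ((one_le_div hδ).2 hv)), spherePoint_zero]

lemma continuous_expand {i : ℕ} (hi : 0 < i) (δ : ℝ) :
    Continuous fun p : ℝ × EuclideanSpace ℝ (Fin n) => expand i δ p.1 p.2 := by
  have hpos (p : ℝ × EuclideanSpace ℝ (Fin n)) :
      (max 0 (1 - p.1 * ‖p.2‖ / δ) * i) ^ 2 + ‖p.2‖ ^ 2 ≠ 0 := by
    rcases eq_or_ne p.2 0 with h | h
    · rw [h, norm_zero, mul_zero, zero_div, sub_zero, max_eq_right zero_le_one]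
      positivity
    · have := norm_pos_iff.2 h
      positivity
  have hcons : Continuous fun p : ℝ × EuclideanSpace ℝ (Fin n) =>
      euclideanCons (max 0 (1 - p.1 * ‖p.2‖ / δ) * i) p.2 :=
    (PiLp.continuous_toLp 2 _).comp (Continuous.finCons (by fun_prop) (by fun_prop))
  exact (Continuous.div (by fun_prop) (by fun_prop) hpos).smul hcons

/-- The bound is uniform in `i`, so that such deformations of all the spheres fit together
continuously at `0`. -/
lemma norm_expand_le {i : ℕ} (hi : 0 < i) {δ s : ℝ} (hδ : 0 < δ) (hs : 0 ≤ s)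
    {x : EuclideanSpace ℝ (Fin (n + 1))} (hx : x ≠ 0) (hmem : x ∈ hawSphere n i)
    {v : EuclideanSpace ℝ (Fin n)} (hv : ‖v - chart x‖ ≤ 1) : ‖expand i δ s v‖ ≤ 2 * ‖x‖ := by
  have hi' : (1 : ℝ) ≤ i := Nat.one_le_cast.2 hi
  have hl0 : 0 ≤ max 0 (1 - s * ‖v‖ / δ) := le_max_left _ _
  have hl1 : max 0 (1 - s * ‖v‖ / δ) ≤ 1 := max_le zero_le_one (sub_le_self _ (by positivity))
  have hchart : ‖chart x‖ ≤ ‖v‖ + 1 := by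
    linarith [norm_sub_norm_le (chart x) v, norm_sub_rev v (chart x)]
  have hcomp : (i : ℝ) ^ 2 + ‖chart x‖ ^ 2 ≤ 3 * (i ^ 2 + ‖v‖ ^ 2) := by
    nlinarith [norm_nonneg (chart x), sq_nonneg (‖v‖ - 1)]
  have hx4 : ‖x‖ ^ 2 * (i ^ 2 + ‖chart x‖ ^ 2) = 4 := by
    rw [sq_add_norm_chart_sq hi hx hmem, mul_div_cancel₀ _ (pow_ne_zero 2 (norm_ne_zero_iff.2 hx))]
  have hle : ‖expand i δ s v‖ ^ 2 ≤ (2 * ‖x‖) ^ 2 := by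
    rw [expand, norm_sq_spherePoint]
    generalize max 0 (1 - s * ‖v‖ / δ) = l at *
    refine div_le_of_le_mul₀ (by positivity) (by positivity) ?_
    calc 4 * l ^ 2 = ‖x‖ ^ 2 * (l ^ 2 * (i ^ 2 + ‖chart x‖ ^ 2)) := by rw [← hx4]; ring
      _ ≤ ‖x‖ ^ 2 * (l ^ 2 * (3 * (i ^ 2 + ‖v‖ ^ 2))) := by gcongr
      _ = 3 * ‖x‖ ^ 2 * ((l * i) ^ 2 + l ^ 2 * ‖v‖ ^ 2) := by ring
      _ ≤ 3 * ‖x‖ ^ 2 * ((l * i) ^ 2 + 1 * ‖v‖ ^ 2) := by gcongr; exact pow_le_one₀ hl0 hl1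
      _ ≤ (2 * ‖x‖) ^ 2 * ((l * i) ^ 2 + ‖v‖ ^ 2) := by
        rw [one_mul]
        gcongr
        nlinarith [sq_nonneg ‖x‖]
  exact le_of_sq_le_sq hle (by positivity)

theorem exists_deformation {Z : Type*} [TopologicalSpace Z] {f : Z → EuclideanSpace ℝ (Fin (n + 1))}
    (hf : Continuous f) (hmem : ∀ z, f z ∈ hawTail n 0) {δ : ℕ → ℝ} (hδ : ∀ i, 0 < δ i)
    {e : ℕ → Z → EuclideanSpace ℝ (Fin n)} (he : ∀ i, Continuous (e i)) (he1 : ∀ i z, ‖e i z‖ ≤ 1) :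
    ∃ H : I × Z → EuclideanSpace ℝ (Fin (n + 1)), Continuous H ∧ (∀ z, H (0, z) = f z) ∧
      (∀ s z, f z = 0 → H (s, z) = 0) ∧
      (∀ i > 0, ∀ s z, f z ∈ hawSphere n i → H (s, z) ∈ hawSphere n i) ∧
      ∀ i > 0, ∀ z, f z ≠ 0 → f z ∈ hawSphere n i → δ i ≤ ‖chart (f z) + e i z‖ →
        H (1, z) = 0 := by
  let G (i : ℕ) (p : I × Z) := expand i (δ i) p.1 (chart (f p.2) + (p.1 : ℝ) • e i p.2)
  have hGcont (i : ℕ) (hi : i > 0) (p : I × Z) (hp : f p.2 ≠ 0) : ContinuousAt (G i) p := by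
    have hchart : ContinuousAt (fun p : I × Z => chart (f p.2)) p :=
      (continuousAt_chart hp).comp (f := fun p : I × Z => f p.2) (by fun_prop)
    exact (continuous_expand hi (δ i)).continuousAt.comp
      (f := fun p : I × Z => ((p.1 : ℝ), chart (f p.2) + (p.1 : ℝ) • e i p.2)) (by fun_prop)
  have hGbound (i : ℕ) (hi : i > 0) (p : I × Z) (hp : f p.2 ≠ 0) (hpi : f p.2 ∈ hawSphere n i) :
      ‖G i p‖ ≤ 2 * ‖f p.2‖ := by
    refine norm_expand_le hi (hδ i) p.1.2.1 hp hpi ?_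
    rw [add_sub_cancel_left, norm_smul, Real.norm_of_nonneg p.1.2.1]
    exact mul_le_one₀ p.1.2.2 (norm_nonneg _) (he1 i p.2)
  have hglue0 (s : I) {z : Z} (hz : f z = 0) : glue (fun p : I × Z => f p.2) G (s, z) = 0 :=
    glue_of_eq_zero (f := fun p : I × Z => f p.2) hz
  have hglue {i : ℕ} (hi : i > 0) (s : I) {z : Z} (hz : f z ≠ 0) (hzi : f z ∈ hawSphere n i) :
      glue (fun p : I × Z => f p.2) G (s, z) = G i (s, z) :=
    glue_of_mem (f := fun p : I × Z => f p.2) hi hz hzi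
  refine ⟨glue (fun p => f p.2) G, continuous_glue (by fun_prop) (fun p => hmem p.2)
    (fun i hi p hp _ => hGcont i hi p hp) hGbound, fun z => ?_, fun s z hz => hglue0 s hz,
    fun i hi s z hzi => ?_, fun i hi z hz hzi hδz => ?_⟩
  · by_cases hz : f z = 0
    · rw [hglue0 0 hz, hz]
    · obtain ⟨i, hi, hzi⟩ := mem_hawTail.1 (hmem z)
      rw [hglue hi 0 hz hzi]
      simp only [G, Set.Icc.coe_zero, zero_smul, add_zero, expand_zero, spherePoint_chart hi hz hzi]
  · by_cases hz : f z = 0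
    · rw [hglue0 s hz]
      exact zero_mem_hawSphere n i
    · rw [hglue hi s hz hzi]
      exact spherePoint_mem hi _ _
  · rw [hglue hi 1 hz hzi]
    simpa only [G, Set.Icc.coe_one, one_smul] using expand_one i (hδ i) hδz

lemma norm_chart_le_two_iff {i : ℕ} (hi : 0 < i) {x : EuclideanSpace ℝ (Fin (n + 1))} (hx : x ≠ 0)
    (hmem : x ∈ hawSphere n i) : ‖chart x‖ ≤ 2 ↔ 4 / ((i : ℝ) ^ 2 + 4) ≤ ‖x‖ ^ 2 := by
  have := norm_pos_iff.2 hx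
  rw [div_le_comm₀ (by positivity) (by positivity), ← sq_add_norm_chart_sq hi hx hmem,
    add_le_add_iff_left, ← sq_le_sq₀ (norm_nonneg _) zero_le_two]
  norm_num

lemma exists_continuous_eq_chart {i : ℕ} (hi : 0 < i) :
    ∃ g : EuclideanSpace ℝ (Fin (n + 1)) → EuclideanSpace ℝ (Fin n), Continuous g ∧
      ∀ x ≠ 0, x ∈ hawSphere n i → ‖chart x‖ ≤ 2 → g x = chart x := by
  refine ⟨fun x => (2 / max (‖x‖ ^ 2) (4 / ((i : ℝ) ^ 2 + 4))) • euclideanTail x, ?_,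
    fun x hx hmem hle => ?_⟩
  · have hmax (x : EuclideanSpace ℝ (Fin (n + 1))) : max (‖x‖ ^ 2) (4 / ((i : ℝ) ^ 2 + 4)) ≠ 0 :=
      (lt_max_of_lt_right (by positivity)).ne'
    exact (continuous_const.div (by fun_prop) hmax).smul continuous_euclideanTail
  · beta_reduce
    rw [chart, max_eq_left ((norm_chart_le_two_iff hi hx hmem).1 hle)]

end Earring

section Grid

variable {N : Type*}

/-- The points of the cube whose `a`-th coordinate is a multiple of `2^{-κ a}` for some `a`. -/
def gridSkeleton (κ : N → ℕ) : Set (N → I) :=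
  {t | ∃ a, ∃ c : ℤ, (2 : ℝ) ^ κ a * t a = c}

/-- The box of the grid with mesh `2^{-κ a}` in each direction `a` whose lowest corner has
coordinates `2^{-κ a} * c a`. -/
def gridCube (κ : N → ℕ) (c : N → ℤ) : Set (N → I) :=
  {t | ∀ a, (2 : ℝ) ^ κ a * t a ∈ Set.Icc (c a : ℝ) (c a + 1)}

lemma isClosed_gridSkeleton [Finite N] (κ : N → ℕ) : IsClosed (gridSkeleton κ) := by
  have hrange : gridSkeleton κ =
      ⋃ a, (fun t : N → I => (2 : ℝ) ^ κ a * t a) ⁻¹' Set.range ((↑) : ℤ → ℝ) := by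
    ext t
    simp only [gridSkeleton, Set.mem_ofPred_eq, Set.mem_iUnion, Set.mem_preimage, Set.mem_range,
      eq_comm]
  rw [hrange]
  exact isClosed_iUnion_of_finite fun a =>
    Int.isClosedEmbedding_coe_real.isClosed_range.preimage (by fun_prop)

lemma volume_grid_eq_zero [Fintype N] (κ : N → ℕ) :
    MeasureTheory.volume {v : EuclideanSpace ℝ N | ∃ a, ∃ c : ℤ, (2 : ℝ) ^ κ a * v a = c} = 0 := by
  have hunion : {v : EuclideanSpace ℝ N | ∃ a, ∃ c : ℤ, (2 : ℝ) ^ κ a * v a = c} =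
      ⋃ a, ⋃ c : ℤ, WithLp.ofLp ⁻¹' {v : N → ℝ | v a = c / 2 ^ κ a} := by
    ext v
    simp only [Set.mem_ofPred_eq, Set.mem_iUnion, Set.mem_preimage]
    refine exists_congr fun a => exists_congr fun c => ?_
    rw [eq_div_iff (by positivity), mul_comm]
  rw [hunion]
  refine MeasureTheory.measure_iUnion_null fun a => MeasureTheory.measure_iUnion_null fun c => ?_
  exact (PiLp.volume_preserving_ofLp N).quasiMeasurePreserving.preimage_null
    (MeasureTheory.Measure.pi_hyperplane _ a _)

lemma exists_gridCube_subset [Finite N] {K V : Set (N → I)} (hK : IsCompact K) (hV : IsOpen V)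
    (hKV : K ⊆ V) : ∃ k : ℕ, ∀ c, (gridCube (fun _ => k) c ∩ K).Nonempty →
      gridCube (fun _ => k) c ⊆ V := by
  have := Fintype.ofFinite N
  obtain ⟨ε, hε, hthick⟩ := hK.exists_thickening_subset_open hV hKV
  obtain ⟨k, hk⟩ := exists_pow_lt_of_lt_one hε (by norm_num : (1 / 2 : ℝ) < 1)
  refine ⟨k, fun c ⟨t, htc, htK⟩ t' ht'c => hthick (Metric.mem_thickening_iff.2 ⟨t, htK, ?_⟩)⟩
  refine lt_of_le_of_lt ((dist_pi_le_iff (by positivity)).2 fun a => ?_) hk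
  have hpow : (0 : ℝ) < 2 ^ k := by positivity
  rw [Subtype.dist_eq, Real.dist_eq, one_div, inv_pow, ← one_div, le_div_iff₀ hpow, mul_comm,
    ← abs_of_pos hpow, ← abs_mul, mul_sub, abs_le]
  constructor <;> linarith [(htc a).1, (htc a).2, (ht'c a).1, (ht'c a).2]

open MeasureTheory in
lemma exists_contDiff_approx_ne_zero {E : Type*} [NormedAddCommGroup E] [NormedSpace ℝ E]
    [FiniteDimensional ℝ E] [MeasurableSpace E] [BorelSpace E] (μ : Measure E) [μ.IsAddHaarMeasure]
    {s : Set E} (hs : μ s = 0) {g : E → E} (hg : Continuous g) {ε : ℝ} (hε : 0 < ε) :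
    ∃ p : E → E, ContDiff ℝ 1 p ∧ (∀ x, dist (p x) (g x) < ε) ∧ ∀ x ∈ s, p x ≠ 0 := by
  obtain ⟨p, hp, hpg, -⟩ := hg.exists_contDiff_approx (ε := fun _ => ε / 2) 1 continuous_const
    fun _ => half_pos hε
  have himage : μ (p '' s) = 0 := addHaar_image_eq_zero_of_differentiableOn_of_addHaar_eq_zero μ
    (hp.differentiable one_ne_zero).differentiableOn hs
  have hball : 0 < μ (Metric.ball 0 (ε / 2)) := Metric.measure_ball_pos μ 0 (half_pos hε)
  obtain ⟨q, hq, hqs⟩ : (Metric.ball 0 (ε / 2) \ p '' s).Nonempty :=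
    nonempty_of_measure_ne_zero (μ := μ) (by rw [measure_sdiff_null himage]; exact hball.ne')
  refine ⟨fun x => p x - q, hp.sub contDiff_const, fun x => ?_, fun x hx h0 =>
    hqs ⟨x, hx, sub_eq_zero.1 h0⟩⟩
  calc dist (p x - q) (g x) ≤ dist (p x - q) (p x) + dist (p x) (g x) := dist_triangle _ _ _
    _ < ε / 2 + ε / 2 := by
      gcongr
      · rw [dist_self_sub_left]
        exact mem_ball_zero_iff.1 hq
      · exact hpg x
    _ = ε := add_halves ε

lemma exists_perturbation {n : ℕ} {f : (Fin n → I) → EuclideanSpace ℝ (Fin (n + 1))}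
    (hf : Continuous f) (κ : Fin n → ℕ) {i : ℕ} (hi : 0 < i) :
    ∃ (e : (Fin n → I) → EuclideanSpace ℝ (Fin n)) (δ : ℝ), Continuous e ∧ (∀ t, ‖e t‖ ≤ 1) ∧
      0 < δ ∧ δ ≤ 1 ∧
      ∀ t ∈ gridSkeleton κ, f t ≠ 0 → f t ∈ hawSphere n i → δ ≤ ‖chart (f t) + e t‖ := by
  obtain ⟨g, hg, hgchart⟩ := exists_continuous_eq_chart (n := n) hi
  let toCube (v : EuclideanSpace ℝ (Fin n)) (a : Fin n) : I := Set.projIcc 0 1 zero_le_one (v a)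
  let ofCube (t : Fin n → I) : EuclideanSpace ℝ (Fin n) := WithLp.toLp 2 fun a => t a
  have htoCube : Continuous toCube := continuous_pi fun a => continuous_projIcc.comp (by fun_prop)
  have htoCube_ofCube (t) : toCube (ofCube t) = t := funext fun a => Set.projIcc_val zero_le_one _
  obtain ⟨p, hp, hpg, hp0⟩ := exists_contDiff_approx_ne_zero _ (volume_grid_eq_zero κ)
    (hg.comp (hf.comp htoCube)) one_pos
  have hpcont : Continuous fun t => p (ofCube t) := hp.continuous.comp (by fun_prop)
  obtain ⟨δ, hδ, hδp⟩ := (isClosed_gridSkeleton κ).isCompact.exists_forall_le'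
    hpcont.norm.continuousOn (a := 0) fun t ht => norm_pos_iff.2 (hp0 _ ht)
  have he1 (t : Fin n → I) : ‖p (ofCube t) - g (f t)‖ ≤ 1 := by
    simpa only [Function.comp_apply, htoCube_ofCube, dist_eq_norm] using (hpg (ofCube t)).le
  refine ⟨fun t => p (ofCube t) - g (f t), min δ 1, hpcont.sub (hg.comp hf), he1,
    lt_min hδ one_pos, min_le_right _ _, fun t ht h0 hmem => ?_⟩
  by_contra! hlt
  have hchart : ‖chart (f t)‖ ≤ 2 := by
    have := norm_le_norm_add_norm_sub' (chart (f t)) (-(p (ofCube t) - g (f t)))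
    rw [norm_neg, sub_neg_eq_add] at this
    linarith [hlt.trans_le (min_le_right δ 1), he1 t]
  rw [← hgchart _ h0 hmem hchart, add_sub_cancel] at hlt
  exact absurd (hδp t ht) (not_le.2 (hlt.trans_le (min_le_left _ _)))

lemma exists_grid_mem_or_two_lt_norm_chart {n : ℕ}
    {f : (Fin n → I) → EuclideanSpace ℝ (Fin (n + 1))} (hf : Continuous f)
    (hmem : ∀ t, f t ∈ hawTail n 0) {i : ℕ} (hi : 0 < i) :
    ∃ k : ℕ, ∀ c, (∀ t ∈ gridCube (fun _ => k) c, f t ∈ hawSphere n i) ∨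
      ∀ t ∈ gridCube (fun _ => k) c, f t ≠ 0 → f t ∈ hawSphere n i → 2 < ‖chart (f t)‖ := by
  let K : Set (Fin n → I) := {t | f t ∈ hawSphere n i ∧ 4 / ((i : ℝ) ^ 2 + 4) ≤ ‖f t‖ ^ 2}
  let V : Set (Fin n → I) := {t | f t ≠ 0 ∧ f t ∈ hawSphere n i}
  have hK : IsClosed K :=
    (Metric.isClosed_sphere.preimage hf).inter (isClosed_le continuous_const (hf.norm.pow 2))
  have hV : IsOpen V := isOpen_iff_mem_nhds.2 fun t ht =>
    (hf.continuousAt.eventually_ne ht.1).and <|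
      (hf.continuousAt.eventually (eventually_mem_hawSphere hi ht.1 ht.2)).mono
        fun t' h => h (hmem t')
  have hKV : K ⊆ V := fun t ht => by
    have hsq : 0 < ‖f t‖ ^ 2 := lt_of_lt_of_le (by positivity) ht.2
    exact ⟨norm_ne_zero_iff.1 (pow_ne_zero_iff two_ne_zero |>.1 hsq.ne'), ht.1⟩
  obtain ⟨k, hk⟩ := exists_gridCube_subset hK.isCompact hV hKV
  refine ⟨k, fun c => ?_⟩
  by_cases hc : (gridCube (fun _ => k) c ∩ K).Nonempty
  · exact .inl fun t ht => (hk c hc ht).2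
  · refine .inr fun t ht h0 hti => not_le.1 fun hle => hc ⟨t, ht, hti, ?_⟩
    exact (norm_chart_le_two_iff hi h0 hti).1 hle

theorem exists_deformation_grid {n j : ℕ} {f : (Fin n → I) → EuclideanSpace ℝ (Fin (n + 1))}
    (hf : Continuous f) (hmem : ∀ t, f t ∈ hawTail n j) :
    ∃ (k : ℕ) (H : I × (Fin n → I) → EuclideanSpace ℝ (Fin (n + 1))), Continuous H ∧
      (∀ t, H (0, t) = f t) ∧ (∀ s t, f t = 0 → H (s, t) = 0) ∧ (∀ s t, H (s, t) ∈ hawTail n j) ∧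
      (∀ t ∈ gridSkeleton (fun _ => k), H (1, t) = 0) ∧
      ∀ c, (∀ t ∈ gridCube (fun _ => k) c, H (1, t) ∈ hawSphere n (j + 1)) ∨
        ∀ t ∈ gridCube (fun _ => k) c, H (1, t) ∈ hawTail n (j + 1) := by
  have hmem0 (t) : f t ∈ hawTail n 0 := hawTail_antitone n j.zero_le (hmem t)
  obtain ⟨k, hk⟩ := exists_grid_mem_or_two_lt_norm_chart hf hmem0 j.succ_pos
  have hpert (i : ℕ) := exists_perturbation hf (fun _ => k) i.succ_pos
  choose e δ he he1 hδ hδ1 hskel using hpert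
  obtain ⟨H, hH, hH0, hHzero, hHmem, hH1⟩ := exists_deformation hf hmem0
    (δ := fun i => δ (i - 1)) (fun _ => hδ _) (e := fun i => e (i - 1)) (fun _ => he _)
    (fun _ => he1 _)
  refine ⟨k, H, hH, hH0, hHzero, fun s t => ?_, fun t ht => ?_, fun c => (hk c).imp ?_ ?_⟩
  · obtain ⟨i, hji, hi⟩ := mem_hawTail.1 (hmem t)
    exact mem_hawTail.2 ⟨i, hji, hHmem i (by omega) s t hi⟩
  · obtain ⟨i, hi, hti⟩ := mem_hawTail.1 (hmem0 t)
    by_cases h0 : f t = 0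
    · exact hHzero 1 t h0
    · refine hH1 i hi t h0 hti (hskel (i - 1) t ht h0 ?_)
      rwa [Nat.succ_eq_add_one, Nat.sub_add_cancel hi]
  · exact fun hsphere t ht => hHmem _ j.succ_pos 1 t (hsphere t ht)
  · intro hfar t ht
    by_cases h0 : f t = 0
    · exact hHzero 1 t h0 ▸ zero_mem_hawTail n (j + 1)
    rcases mem_hawSphere_or_mem_hawTail_succ (hmem t) with hti | hti
    · have hge : δ j ≤ ‖chart (f t) + e j t‖ := by
        have := norm_le_norm_add_norm_sub' (chart (f t)) (-e j t)
        rw [norm_neg, sub_neg_eq_add] at this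
        linarith [hδ1 j, he1 j t, hfar t ht h0 hti]
      exact hH1 (j + 1) j.succ_pos t h0 hti hge ▸ zero_mem_hawTail n (j + 1)
    · obtain ⟨i, hji, hi⟩ := mem_hawTail.1 hti
      exact mem_hawTail.2 ⟨i, hji, hHmem i (by omega) 1 t hi⟩

end Grid

section GridInduction

variable {N X : Type*} [DecidableEq N] [TopologicalSpace X] {x : X}

/-- The affine embedding of the unit interval onto its lower (`b = false`) or upper (`b = true`)
half, applied to the `i`-th coordinate of a point of the cube. -/
def halve (i : N) (b : Bool) (t : N → I) : N → I :=
  Function.update t i ⟨((t i : ℝ) + b.toNat) / 2, by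
    have := (t i).2
    cases b <;> constructor <;> norm_num <;> linarith [this.1, this.2]⟩

lemma coe_halve_self (i : N) (b : Bool) (t : N → I) :
    (halve i b t i : ℝ) = ((t i : ℝ) + b.toNat) / 2 := by
  rw [halve, Function.update_self]

lemma halve_of_ne {a i : N} (hai : a ≠ i) (b : Bool) (t : N → I) : halve i b t a = t a :=
  Function.update_of_ne hai _ _

lemma halve_update_self (i : N) (b : Bool) (t : N → I) {y : I}
    (hy : ((y : ℝ) + b.toNat) / 2 = t i) : halve i b (Function.update t i y) = t := by
  rw [halve, Function.update_idem, Function.update_eq_self_iff]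
  exact Subtype.ext (by simp only [Function.update_self, hy])

lemma continuous_halve (i : N) (b : Bool) : Continuous (halve i b) :=
  continuous_id.update i (by fun_prop)

lemma two_pow_mul_halve (κ : N → ℕ) (i : N) (b : Bool) (t : N → I) (a : N) :
    (2 : ℝ) ^ (κ + Pi.single i 1 : N → ℕ) a * halve i b t a =
      2 ^ κ a * t a + ((Pi.single i (b.toNat * 2 ^ κ i) : N → ℤ) a : ℤ) := by
  rcases eq_or_ne a i with rfl | hai
  · rw [coe_halve_self, Pi.add_apply, Pi.single_eq_same, Pi.single_eq_same, pow_succ]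
    push_cast
    ring
  · simp only [halve_of_ne hai, Pi.add_apply, Pi.single_eq_of_ne hai, Int.cast_zero, add_zero]

lemma halve_mem_gridSkeleton {κ : N → ℕ} (i : N) (b : Bool) {t : N → I}
    (ht : t ∈ gridSkeleton κ) : halve i b t ∈ gridSkeleton (κ + Pi.single i 1) := by
  obtain ⟨a, c, hc⟩ := ht
  exact ⟨a, _, by rw [two_pow_mul_halve, hc, ← Int.cast_add]⟩

lemma halve_mem_gridCube {κ : N → ℕ} (i : N) (b : Bool) {c : N → ℤ} {t : N → I}
    (ht : t ∈ gridCube κ c) :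
    halve i b t ∈ gridCube (κ + Pi.single i 1) (c + Pi.single i (b.toNat * 2 ^ κ i)) := fun a => by
  rw [two_pow_mul_halve, Pi.add_apply, Int.cast_add, add_right_comm]
  exact ⟨add_le_add_left (ht a).1 _, add_le_add_left (ht a).2 _⟩

lemma mem_gridSkeleton_of_eq_half (κ : N → ℕ) {i : N} {t : N → I} (ht : (t i : ℝ) = 1 / 2) :
    t ∈ gridSkeleton (κ + Pi.single i 1) :=
  ⟨i, 2 ^ κ i, by rw [ht, Pi.add_apply, Pi.single_eq_same, pow_succ]; push_cast; ring⟩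

lemma halve_mem_boundary_or (i : N) (b : Bool) {t : N → I} (ht : t ∈ Cube.boundary N) :
    halve i b t ∈ Cube.boundary N ∨ (halve i b t i : ℝ) = 1 / 2 := by
  obtain ⟨a, ha⟩ := ht
  rcases eq_or_ne a i with rfl | hai
  · rcases ha with ha | ha <;> cases b
    · exact .inl ⟨a, .inl (Subtype.ext (by rw [coe_halve_self, ha]; norm_num))⟩
    · exact .inr (by rw [coe_halve_self, ha]; norm_num)
    · exact .inr (by rw [coe_halve_self, ha]; norm_num)
    · exact .inl ⟨a, .inr (Subtype.ext (by rw [coe_halve_self, ha]; norm_num))⟩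
  · exact .inl ⟨a, by rwa [halve_of_ne hai]⟩

/-- The restriction of a loop to one of the halves of the cube, when the loop is trivial on the wall
between them. -/
def halfLoop (i : N) (f : Ω^ N X x) (hf : ∀ t, (t i : ℝ) = 1 / 2 → f t = x) (b : Bool) :
    Ω^ N X x :=
  ⟨⟨fun t => f (halve i b t), f.1.continuous.comp (continuous_halve i b)⟩, fun _ ht =>
    (halve_mem_boundary_or i b ht).elim (f.2 _) (hf _)⟩

lemma transAt_halfLoop (i : N) (f : Ω^ N X x) (hf : ∀ t, (t i : ℝ) = 1 / 2 → f t = x) :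
    GenLoop.transAt i (halfLoop i f hf false) (halfLoop i f hf true) = f := by
  refine GenLoop.ext _ _ fun t => ?_
  obtain ⟨h0, h1⟩ := (t i).2
  change ite _ (f (halve i false _)) (f (halve i true _)) = f t
  split_ifs with ht <;>
  · refine congrArg f (halve_update_self i _ t ?_)
    rw [Set.projIcc_of_mem _ (by constructor <;> linarith)]
    norm_num

theorem homotopyClass_mem_of_grid [Finite N] [Nonempty N] {S : Submonoid (HomotopyGroup N X x)}
    {𝒜 : Set (Set X)} (h𝒜 : ∀ A ∈ 𝒜, ∀ f : Ω^ N X x, (∀ t, f t ∈ A) → homotopyClass f ∈ S)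
    (κ : N → ℕ) (f : Ω^ N X x) (hskel : ∀ t ∈ gridSkeleton κ, f t = x)
    (hcube : ∀ c, ∃ A ∈ 𝒜, ∀ t ∈ gridCube κ c, f t ∈ A) : homotopyClass f ∈ S := by
  have := Fintype.ofFinite N
  induction hsum : ∑ a, κ a generalizing κ f with
  | zero =>
    obtain ⟨A, hA, hfA⟩ := hcube 0
    refine h𝒜 A hA f fun t => hfA t fun a => ?_
    rw [Finset.sum_eq_zero_iff.1 hsum a (Finset.mem_univ a), pow_zero, one_mul, Pi.zero_apply,
      Int.cast_zero, zero_add]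
    exact (t a).2
  | succ s ih =>
    obtain ⟨i, -, hi⟩ := Finset.exists_ne_zero_of_sum_ne_zero (hsum.trans_ne s.succ_ne_zero)
    obtain ⟨κ, rfl⟩ : ∃ κ', κ = κ' + Pi.single i 1 :=
      le_iff_exists_add'.1
        (update_le_iff.2 ⟨Nat.one_le_iff_ne_zero.2 hi, fun _ _ => Nat.zero_le _⟩)
    have hsum' : ∑ a, κ a = s := by
      simpa only [Pi.add_apply, Finset.sum_add_distrib, Finset.sum_pi_single', Finset.mem_univ,
        if_true, Nat.add_right_cancel_iff] using hsum
    have hwall (t : N → I) (ht : (t i : ℝ) = 1 / 2) : f t = x :=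
      hskel t (mem_gridSkeleton_of_eq_half κ ht)
    have hhalf (b : Bool) : homotopyClass (halfLoop i f hwall b) ∈ S :=
      ih κ _ (fun t ht => hskel _ (halve_mem_gridSkeleton i b ht)) (fun c =>
        (hcube _).imp fun A hA => ⟨hA.1, fun t ht => hA.2 _ (halve_mem_gridCube i b ht)⟩) hsum'
    rw [← transAt_halfLoop i f hwall, homotopyClass_transAt]
    exact S.mul_mem (hhalf true) (hhalf false)

/-- The classes of the loops with values in a given set. -/
def loopsIn [Nonempty N] (A : Set X) (hA : x ∈ A) : Submonoid (HomotopyGroup N X x) where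
  carrier := {γ | ∃ f : Ω^ N X x, (∀ t, f t ∈ A) ∧ homotopyClass f = γ}
  one_mem' := ⟨GenLoop.const, fun _ => hA, HomotopyGroup.one_def.symm⟩
  mul_mem' := by
    rintro _ _ ⟨f, hf, rfl⟩ ⟨g, hg, rfl⟩
    let i := Classical.arbitrary N
    refine ⟨GenLoop.transAt i g f, fun t => ?_, homotopyClass_transAt i g f⟩
    change ite _ (g _) (f _) ∈ A
    split_ifs
    exacts [hg _, hf _]

theorem exists_homotopic_transAt_of_grid [Finite N] [Nontrivial N] (i : N) {A B : Set X}
    (hA : x ∈ A) (hB : x ∈ B) {κ : N → ℕ} {f : Ω^ N X x} (hskel : ∀ t ∈ gridSkeleton κ, f t = x)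
    (hcube : ∀ c, (∀ t ∈ gridCube κ c, f t ∈ A) ∨ ∀ t ∈ gridCube κ c, f t ∈ B) :
    ∃ a b : Ω^ N X x, (∀ t, a t ∈ A) ∧ (∀ t, b t ∈ B) ∧
      GenLoop.Homotopic f (GenLoop.transAt i a b) := by
  have hf : homotopyClass f ∈ loopsIn B hB ⊔ loopsIn A hA := by
    refine homotopyClass_mem_of_grid (𝒜 := {A, B}) ?_ κ f hskel fun c => ?_
    · rintro _ (rfl | rfl) a ha
      exacts [Submonoid.mem_sup_right ⟨a, ha, rfl⟩, Submonoid.mem_sup_left ⟨a, ha, rfl⟩]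
    · exact (hcube c).elim (fun h => ⟨A, .inl rfl, h⟩) fun h => ⟨B, .inr rfl, h⟩
  obtain ⟨_, ⟨b, hb, rfl⟩, _, ⟨a, ha, rfl⟩, hab⟩ := Submonoid.mem_sup.1 hf
  exact ⟨a, b, ha, hb, homotopyClass_eq_iff.1 (hab.symm.trans (homotopyClass_transAt i a b).symm)⟩

end GridInduction

section Splitting

lemma exists_inclLoop_eq {N E : Type*} [TopologicalSpace E] {A B : Set E} (h : A ⊆ B) {x : E}
    (hx : x ∈ A) (f : Ω^ N B ⟨x, h hx⟩) (hf : ∀ t, (f t : E) ∈ A) :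
    ∃ g : Ω^ N A ⟨x, hx⟩, inclLoop h g = f :=
  ⟨⟨⟨fun t => ⟨f t, hf t⟩, by fun_prop⟩, fun t ht =>
    Subtype.ext (congrArg Subtype.val (f.2 t ht) :)⟩, rfl⟩

theorem exists_homotopic_grid {n j : ℕ} (f : (hawTails n).Loop (Fin n) j) :
    ∃ (k : ℕ) (g : (hawTails n).Loop (Fin n) j), GenLoop.Homotopic f g ∧
      (∀ t ∈ gridSkeleton (fun _ => k), (g t : EuclideanSpace ℝ (Fin (n + 1))) = 0) ∧
      ∀ c, (∀ t ∈ gridCube (fun _ => k) c, (g t).1 ∈ hawSphere n (j + 1)) ∨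
        ∀ t ∈ gridCube (fun _ => k) c, (g t).1 ∈ hawTail n (j + 1) := by
  obtain ⟨k, H, hH, hH0, hHzero, hHmem, hskel, hcube⟩ :=
    exists_deformation_grid (f := fun t => (f t).1) (by fun_prop) fun t => (f t).2
  have hboundary (s : I) (t) (ht : t ∈ Cube.boundary (Fin n)) : H (s, t) = 0 :=
    hHzero s t (f.coe_boundary ht)
  let g : (hawTails n).Loop (Fin n) j := ⟨⟨fun t => ⟨H (1, t), hHmem 1 t⟩, by fun_prop⟩,
    fun t ht => Subtype.ext (hboundary 1 t ht)⟩
  refine ⟨k, g, ⟨?_⟩, hskel, hcube⟩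
  exact
   { toFun z := ⟨H z, hHmem z.1 z.2⟩
     continuous_toFun := by fun_prop
     map_zero_left t := Subtype.ext (hH0 t)
     map_one_left t := rfl
     prop' s t ht := Subtype.ext ((hboundary s t ht).trans (f.coe_boundary ht).symm) }

theorem exists_homotopic_transAt_incl {n j : ℕ} [Nontrivial (Fin n)] (k : Fin n)
    (f : (hawTails n).Loop (Fin n) j) :
    ∃ (a : (hawTails n).Loop (Fin n) j) (b : (hawTails n).Loop (Fin n) (j + 1)),
      (∀ t, (a t).1 ∈ hawSphere n (j + 1)) ∧
        GenLoop.Homotopic f (GenLoop.transAt k a ((hawTails n).incl b)) := by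
  obtain ⟨κ, g, hfg, hskel, hcube⟩ := exists_homotopic_grid f
  let base : (hawTails n).sets j := ⟨0, (hawTails n).zero_mem j⟩
  have hA : base ∈ Subtype.val ⁻¹' hawSphere n (j + 1) := zero_mem_hawSphere _ _
  have hB : base ∈ Subtype.val ⁻¹' hawTail n (j + 1) := zero_mem_hawTail _ _
  obtain ⟨a, b, ha, hb, hgab⟩ := exists_homotopic_transAt_of_grid k hA hB
    (fun t ht => Subtype.ext (hskel t ht)) hcube
  obtain ⟨b, rfl⟩ := exists_inclLoop_eq ((hawTails n).antitone j.le_succ)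
    ((hawTails n).zero_mem (j + 1)) b hb
  exact ⟨a, b, ha, hfg.trans hgab⟩

theorem exists_homotopic_concat {n : ℕ} [Nontrivial (Fin n)] (i : Fin n)
    (f : (hawTails n).Loop (Fin n) 0) :
    ∃ a : ∀ j, (hawTails n).Loop (Fin n) j, (∀ j t, (a j t).1 ∈ hawSphere n (j + 1)) ∧
      GenLoop.Homotopic f (ShrinkingSets.concat i a) := by
  obtain ⟨k, hki⟩ := exists_ne i
  choose a b hmem hab using fun j => exists_homotopic_transAt_incl (n := n) (j := j) k
  let F (j : ℕ) : (hawTails n).Loop (Fin n) j := Nat.rec f b j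
  exact ⟨fun j => a j (F j), fun j => hmem j (F j),
    ShrinkingSets.homotopic_concat (F := F) hki fun j => hab j (F j)⟩

end Splitting

/-- For `n = m+2 ≥ 2`, every homotopy class in `π_n(ℋ_n, 0)` is represented by a standard
`n`-loop `h`: one with `h(J_i^n) ⊆ S_i^n` for every `i ≥ 1`, where
`J_i^n = [1 - 2^{-(i-1)}, 1 - 2^{-i}] × [0,1]^{n-1}`. -/
theorem exists_standard_representative (m : ℕ)
    (γ : HomotopyGroup (Fin (m+2)) (hawaiian (m+2)) (hawaiianPt (m+2))) :
    ∃ h : Ω^ (Fin (m+2)) (hawaiian (m+2)) (hawaiianPt (m+2)),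
      (⟦h⟧ : HomotopyGroup (Fin (m+2)) (hawaiian (m+2)) (hawaiianPt (m+2))) = γ ∧
      ∀ i : ℕ, 1 ≤ i → ∀ t : Fin (m+2) → I,
        (1 - ((2 : ℝ))⁻¹ ^ (i - 1) ≤ (t 0 : ℝ) ∧ (t 0 : ℝ) ≤ 1 - ((2 : ℝ))⁻¹ ^ i) →
        ((h t : ↥(hawaiian (m+2))) : EuclideanSpace ℝ (Fin (m+3))) ∈ hawSphere (m+2) i := by
  obtain ⟨f, rfl⟩ := Quotient.exists_rep γ
  obtain ⟨a, hmem, hfa⟩ := exists_homotopic_concat 0 f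
  refine ⟨ShrinkingSets.concat 0 a, homotopyClass_eq_iff.2 hfa.symm, fun i hi t ht => ?_⟩
  obtain ⟨j, rfl⟩ := Nat.exists_eq_add_of_le' hi
  exact ShrinkingSets.concat_of_mem_block 0 a ht ▸ hmem j _
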